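/- arXiv:2302.10773 — 2 statements merged into one kernel-verified Lean document; each statement's English description precedes it below -/
import Mathlib

section
/- Let d, n ∈ ℕ, B, C, D, R ≥ 0 real, and f : ℝ^d → ℝ^n a three-times continuously differentiable map whose components satisfy |∂_{x_k} f_j(x)| ≤ B, |∂²_{x_k x_m} f_j(x)| ≤ C, and |∂³_{x_k x_m x_s} f_j(x)| ≤ D for all j < n, all k, m, s < d, and all x ∈ ℝ^d. Let a ∈ ℝ^n with |a_j| ≤ R for all j and b ∈ ℝ, and define g : ℝ^d → ℝ by g(x) = tanh(∑_{j<n} a_j f_j(x) + b). Then |∂³_{x_k x_m x_s} g(x)| ≤ 2·n³·R³·B³ + 3·n²·R²·B·C + n·R·D for all k, m, s < d and all x ∈ ℝ^d. -/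
/-- The partial derivative of `f : ℝ^d → ℝ` in the `k`-th coordinate direction. -/
noncomputable def pd {d : ℕ} (f : (Fin d → ℝ) → ℝ) (k : Fin d) : (Fin d → ℝ) → ℝ :=
  fun x => fderiv ℝ f x (Pi.single k 1)

theorem aux_tanh (x : ℝ) : HasDerivAt Real.tanh (1 - Real.tanh x ^ 2) x := by
  have h := (Real.hasDerivAt_sinh x).div (Real.hasDerivAt_cosh x) (Real.cosh_pos x).ne'
  have e : Real.tanh = Real.sinh / Real.cosh := by
    funext y; simp [Real.tanh_eq_sinh_div_cosh]
  rw [e]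
  refine h.congr_deriv ?_
  have := (Real.cosh_pos x).ne'
  rw [Pi.div_apply]
  field_simp

theorem aux_tanh1 (x : ℝ) : HasDerivAt (fun y => 1 - Real.tanh y ^ 2)
    (-2 * Real.tanh x * (1 - Real.tanh x ^ 2)) x := by
  refine (((aux_tanh x).pow 2).const_sub 1).congr_deriv ?_
  simp

theorem aux_tanh2 (x : ℝ) : HasDerivAt (fun y => -2 * Real.tanh y * (1 - Real.tanh y ^ 2))
    ((1 - Real.tanh x ^ 2) * (6 * Real.tanh x ^ 2 - 2)) x := by
  refine (((aux_tanh x).const_mul (-2)).mul (aux_tanh1 x)).congr_deriv ?_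
  ring

theorem pd_comp {d : ℕ} {φ : ℝ → ℝ} {φ' : ℝ} {u : (Fin d → ℝ) → ℝ} {x : Fin d → ℝ} (k : Fin d)
    (h : HasDerivAt φ φ' (u x)) (hu : DifferentiableAt ℝ u x) :
    pd (fun y => φ (u y)) k x = φ' * pd u k x := by
  unfold pd
  have := h.comp_hasFDerivAt x hu.hasFDerivAt
  rw [show (fun y => φ (u y)) = φ ∘ u from rfl, this.fderiv]
  simp

theorem pd_mul {d : ℕ} {u v : (Fin d → ℝ) → ℝ} {x : Fin d → ℝ} (k : Fin d)
    (hu : DifferentiableAt ℝ u x) (hv : DifferentiableAt ℝ v x) :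
    pd (fun y => u y * v y) k x = u x * pd v k x + pd u k x * v x := by
  unfold pd
  rw [fderiv_fun_mul hu hv]
  simp [mul_comm]

theorem pd_add {d : ℕ} {u v : (Fin d → ℝ) → ℝ} {x : Fin d → ℝ} (k : Fin d)
    (hu : DifferentiableAt ℝ u x) (hv : DifferentiableAt ℝ v x) :
    pd (fun y => u y + v y) k x = pd u k x + pd v k x := by
  unfold pd
  rw [fderiv_fun_add hu hv]
  simp

theorem pd_sum {d n : ℕ} (a : Fin n → ℝ) (b : ℝ) (F : Fin n → (Fin d → ℝ) → ℝ)
    (hF : ∀ j, Differentiable ℝ (F j)) (k : Fin d) :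
    pd (fun y => ∑ j, a j * F j y + b) k = fun y => ∑ j, a j * pd (F j) k y := by
  funext x
  unfold pd
  have : HasFDerivAt (fun y => ∑ j, a j * F j y + b) (∑ j, a j • fderiv ℝ (F j) x) x :=
    (HasFDerivAt.fun_sum fun j _ => ((hF j x).hasFDerivAt.const_mul (a j))).add_const b
  rw [this.fderiv]
  simp

theorem pd_contDiff {d : ℕ} {n m : WithTop ℕ∞} {u : (Fin d → ℝ) → ℝ} (hu : ContDiff ℝ n u)
    (h : m + 1 ≤ n) (k : Fin d) : ContDiff ℝ m (pd u k) :=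
  (hu.fderiv_right h).clm_apply contDiff_const

theorem aux_sum_bound {n : ℕ} {R B : ℝ} (hR : 0 ≤ R) {a v : Fin n → ℝ}
    (ha : ∀ j, |a j| ≤ R) (hv : ∀ j, |v j| ≤ B) : |∑ j, a j * v j| ≤ n * R * B := by
  calc |∑ j, a j * v j| ≤ ∑ j, |a j * v j| := Finset.abs_sum_le_sum_abs _ _
    _ ≤ ∑ _j : Fin n, R * B := by
        gcongr with j
        rw [abs_mul]
        exact mul_le_mul (ha j) (hv j) (abs_nonneg _) hR
    _ = n * R * B := by simp [mul_assoc]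

theorem pd3_tanh {d : ℕ} {u : (Fin d → ℝ) → ℝ} (hu : ContDiff ℝ 3 u) (k m s : Fin d)
    (x : Fin d → ℝ) :
    pd (pd (pd (fun y => Real.tanh (u y)) k) m) s x =
      (1 - Real.tanh (u x) ^ 2) * (6 * Real.tanh (u x) ^ 2 - 2)
          * (pd u k x * pd u m x * pd u s x)
        + (-2 * Real.tanh (u x) * (1 - Real.tanh (u x) ^ 2))
          * (pd (pd u k) s x * pd u m x + pd u k x * pd (pd u m) s x
            + pd (pd u k) m x * pd u s x)
        + (1 - Real.tanh (u x) ^ 2) * pd (pd (pd u k) m) s x := by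
  have du : Differentiable ℝ u := hu.differentiable (by norm_num)
  have c1 : ∀ k, ContDiff ℝ 2 (pd u k) := fun k => pd_contDiff hu (by norm_num) k
  have d1 : ∀ k, Differentiable ℝ (pd u k) := fun k => (c1 k).differentiable (by norm_num)
  have c2 : ∀ k m, ContDiff ℝ 1 (pd (pd u k) m) := fun k m =>
    pd_contDiff (c1 k) (by norm_num) m
  have d2 : ∀ k m, Differentiable ℝ (pd (pd u k) m) := fun k m =>
    (c2 k m).differentiable (by norm_num)
  have D1 : Differentiable ℝ (fun y => 1 - Real.tanh (u y) ^ 2) := fun y =>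
    (aux_tanh1 (u y)).differentiableAt.comp y (du y)
  have D2 : Differentiable ℝ
      (fun y => -2 * Real.tanh (u y) * (1 - Real.tanh (u y) ^ 2)) := fun y =>
    (aux_tanh2 (u y)).differentiableAt.comp y (du y)
  have e1 : pd (fun y => Real.tanh (u y)) k =
      fun y => (1 - Real.tanh (u y) ^ 2) * pd u k y := by
    funext y
    exact pd_comp k (aux_tanh (u y)) (du y)
  have e2 : pd (fun y => (1 - Real.tanh (u y) ^ 2) * pd u k y) m =
      fun y => (1 - Real.tanh (u y) ^ 2) * pd (pd u k) m y
        + -2 * Real.tanh (u y) * (1 - Real.tanh (u y) ^ 2) * (pd u m y * pd u k y) := by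
    funext y
    rw [pd_mul m (D1 y) (d1 k y), pd_comp m (aux_tanh1 (u y)) (du y)]
    ring
  rw [e1, e2, pd_add s ((D1 x).fun_mul (d2 k m x)) ((D2 x).fun_mul ((d1 m x).fun_mul (d1 k x))),
    pd_mul s (D1 x) (d2 k m x), pd_mul s (D2 x) ((d1 m x).fun_mul (d1 k x)),
    pd_mul s (d1 m x) (d1 k x), pd_comp s (aux_tanh1 (u x)) (du x),
    pd_comp s (aux_tanh2 (u x)) (du x)]
  ring

theorem tanh_layer_third_deriv_bound (d n : ℕ) (B C D R : ℝ)
    (hB : 0 ≤ B) (hC : 0 ≤ C) (hD : 0 ≤ D) (hR : 0 ≤ R)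
    (f : (Fin d → ℝ) → Fin n → ℝ) (hf : ContDiff ℝ 3 f)
    (hfd : ∀ (j : Fin n) (k : Fin d) (x : Fin d → ℝ), |pd (fun y => f y j) k x| ≤ B)
    (hfd2 : ∀ (j : Fin n) (k m : Fin d) (x : Fin d → ℝ),
      |pd (pd (fun y => f y j) k) m x| ≤ C)
    (hfd3 : ∀ (j : Fin n) (k m s : Fin d) (x : Fin d → ℝ),
      |pd (pd (pd (fun y => f y j) k) m) s x| ≤ D)
    (a : Fin n → ℝ) (ha : ∀ j, |a j| ≤ R) (b : ℝ) :
    ∀ (k m s : Fin d) (x : Fin d → ℝ),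
      |pd (pd (pd (fun y : Fin d → ℝ => Real.tanh (∑ j, a j * f y j + b)) k) m) s x| ≤
        2 * (n : ℝ) ^ 3 * R ^ 3 * B ^ 3 + 3 * (n : ℝ) ^ 2 * R ^ 2 * B * C + n * R * D := by
  intro k m s x
  have hfj : ∀ j, ContDiff ℝ 3 (fun y => f y j) := fun j => (contDiff_pi.1 hf) j
  have c1 : ∀ j k, ContDiff ℝ 2 (pd (fun y => f y j) k) := fun j k =>
    pd_contDiff (hfj j) (by norm_num) k
  have c2 : ∀ j k m, ContDiff ℝ 1 (pd (pd (fun y => f y j) k) m) := fun j k m =>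
    pd_contDiff (c1 j k) (by norm_num) m
  have hu : ContDiff ℝ 3 (fun y : Fin d → ℝ => ∑ j, a j * f y j + b) :=
    (ContDiff.sum fun j _ => contDiff_const.mul (hfj j)).add contDiff_const
  have e1 : ∀ k, pd (fun y : Fin d → ℝ => ∑ j, a j * f y j + b) k =
      fun y => ∑ j, a j * pd (fun y => f y j) k y := fun k =>
    pd_sum a b (fun j y => f y j) (fun j => (hfj j).differentiable (by norm_num)) k
  have e2 : ∀ k m, pd (fun y => ∑ j, a j * pd (fun y => f y j) k y) m =
      fun y => ∑ j, a j * pd (pd (fun y => f y j) k) m y := fun k m => by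
    simpa using pd_sum a 0 (fun j => pd (fun y => f y j) k)
      (fun j => (c1 j k).differentiable (by norm_num)) m
  have e3 : pd (fun y => ∑ j, a j * pd (pd (fun y => f y j) k) m y) s =
      fun y => ∑ j, a j * pd (pd (pd (fun y => f y j) k) m) s y := by
    simpa using pd_sum a 0 (fun j => pd (pd (fun y => f y j) k) m)
      (fun j => (c2 j k m).differentiable (by norm_num)) s
  rw [pd3_tanh hu k m s x]
  simp only [e1, e2, e3]
  have b1 : ∀ k, |∑ j, a j * pd (fun y => f y j) k x| ≤ n * R * B := fun k =>
    aux_sum_bound hR ha fun j => hfd j k x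
  have b2 : ∀ k m, |∑ j, a j * pd (pd (fun y => f y j) k) m x| ≤ n * R * C := fun k m =>
    aux_sum_bound hR ha fun j => hfd2 j k m x
  have b3 : |∑ j, a j * pd (pd (pd (fun y => f y j) k) m) s x| ≤ n * R * D :=
    aux_sum_bound hR ha fun j => hfd3 j k m s x
  have h1 := b1 k
  have h2 := b1 m
  have h3 := b1 s
  have h4 := b2 k s
  have h5 := b2 m s
  have h6 := b2 k m
  have ht := Real.tanh_sq_lt_one (∑ j, a j * f x j + b)
  clear b1 b2
  generalize Real.tanh (∑ j, a j * f x j + b) = t at *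
  have t0 := sq_nonneg t
  have T1 : |1 - t ^ 2| ≤ 1 := by rw [abs_le]; constructor <;> linarith
  have T2 : |-2 * t * (1 - t ^ 2)| ≤ 1 := by
    rw [← sq_le_one_iff_abs_le_one]
    have : 0 ≤ (1 - t ^ 2) := by linarith
    nlinarith [mul_nonneg t0 (sq_nonneg (3 * t ^ 2 - 1)), sq_nonneg (3 * t ^ 2 - 1)]
  have T3 : |(1 - t ^ 2) * (6 * t ^ 2 - 2)| ≤ 2 := by
    rw [abs_le]
    constructor <;> nlinarith
  have hP : 0 ≤ n * R * B := by positivity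
  have hQ : 0 ≤ n * R * C := by positivity
  calc _ ≤ 2 * ((n * R * B) * (n * R * B) * (n * R * B))
        + 1 * ((n * R * C) * (n * R * B) + (n * R * B) * (n * R * C)
          + (n * R * C) * (n * R * B)) + 1 * (n * R * D) := by
        refine (abs_add_three _ _ _).trans ?_
        simp only [abs_mul _ (_ * _ * _), abs_mul _ (_ + _ + _), abs_mul (1 - t ^ 2) (∑ _, _)]
        gcongr
        · rw [abs_mul, abs_mul]
          gcongr
        · refine (abs_add_three _ _ _).trans ?_
          rw [abs_mul, abs_mul, abs_mul]
          gcongr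
    _ = _ := by ring
end

section
/- Consider a tanh network of width W and weight bound R on ℝ^d. Then for every layer index ℓ ≥ 1, every component index i < W, every coordinate k < d, and every x ∈ ℝ^d, the first-order partial derivative satisfies |∂_{x_k} v^{(ℓ)}_i(x)| ≤ R^ℓ · W^{ℓ−1}. -/
theorem hasDerivAt_tanh_aux (t : ℝ) :
    HasDerivAt Real.tanh (1 / Real.cosh t ^ 2) t := by
  have h := (Real.hasDerivAt_sinh t).div (Real.hasDerivAt_cosh t) (Real.cosh_pos t).ne'
  have e : Real.tanh = Real.sinh / Real.cosh := by
    funext y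
    exact Real.tanh_eq_sinh_div_cosh y
  rw [e]
  have e2 : Real.cosh t * Real.cosh t - Real.sinh t * Real.sinh t = 1 := by
    have := Real.cosh_sq t
    linarith
  rw [e2] at h
  exact h

theorem layer_aux {d n : ℕ} (a : Fin n → ℝ) (c : ℝ) (g : Fin n → (Fin d → ℝ) → ℝ)
    (x : Fin d → ℝ) (hg : ∀ j, DifferentiableAt ℝ (g j) x) :
    DifferentiableAt ℝ (fun y => Real.tanh (∑ j, a j * g j y + c)) x ∧
    ∀ u, |fderiv ℝ (fun y => Real.tanh (∑ j, a j * g j y + c)) x u| ≤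
      |∑ j, a j * fderiv ℝ (g j) x u| := by
  have h1 : HasFDerivAt (fun y => ∑ j, a j * g j y + c) (∑ j, a j • fderiv ℝ (g j) x) x :=
    (HasFDerivAt.fun_sum fun j _ => (hg j).hasFDerivAt.const_mul (a j)).add_const c
  have h2 := (hasDerivAt_tanh_aux (∑ j, a j * g j x + c)).comp_hasFDerivAt x h1
  refine ⟨h2.differentiableAt, fun u => ?_⟩
  have h3 := h2.fderiv
  simp only [Function.comp_def] at h3
  rw [h3]
  simp only [ContinuousLinearMap.smul_apply, ContinuousLinearMap.sum_apply, smul_eq_mul, abs_mul]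
  refine mul_le_of_le_one_left (abs_nonneg _) ?_
  have hc := Real.one_le_cosh (∑ j, a j * g j x + c)
  rw [abs_of_nonneg (by positivity)]
  exact (div_le_one (by positivity)).2 (one_le_pow₀ hc)

theorem tanh_network_first_deriv_bound (d W : ℕ) (hW : 1 ≤ W) (R : ℝ) (hR : 0 ≤ R)
    (A1 : Fin W → Fin d → ℝ) (b1 : Fin W → ℝ)
    (A : ℕ → Fin W → Fin W → ℝ) (b : ℕ → Fin W → ℝ)
    (hA1 : ∀ i j, |A1 i j| ≤ R) (hA : ∀ ℓ i j, |A ℓ i j| ≤ R)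
    (v : ℕ → (Fin d → ℝ) → Fin W → ℝ)
    (hv1 : ∀ (i : Fin W) (x : Fin d → ℝ),
      v 1 x i = Real.tanh (∑ j, A1 i j * x j + b1 i))
    (hv : ∀ ℓ : ℕ, 2 ≤ ℓ → ∀ (i : Fin W) (x : Fin d → ℝ),
      v ℓ x i = Real.tanh (∑ j, A ℓ i j * v (ℓ - 1) x j + b ℓ i)) :
    ∀ ℓ : ℕ, 1 ≤ ℓ → ∀ (i : Fin W) (k : Fin d) (x : Fin d → ℝ),
      |pd (fun y => v ℓ y i) k x| ≤ R ^ ℓ * (W : ℝ) ^ (ℓ - 1) := by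
  suffices H : ∀ n : ℕ, ∀ (i : Fin W) (x : Fin d → ℝ),
      DifferentiableAt ℝ (fun y => v (n + 1) y i) x ∧
      ∀ k : Fin d, |pd (fun y => v (n + 1) y i) k x| ≤ R ^ (n + 1) * (W : ℝ) ^ n by
    intro ℓ hℓ i k x
    obtain ⟨n, rfl⟩ : ∃ n, ℓ = n + 1 := ⟨ℓ - 1, by omega⟩
    simpa using (H n i x).2 k
  intro n
  induction n with
  | zero =>
    intro i x
    have e : (fun y => v (0 + 1) y i) = fun y => Real.tanh (∑ j, A1 i j * y j + b1 i) := by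
      funext y
      exact hv1 i y
    have hd : ∀ j : Fin d, HasFDerivAt (fun y : Fin d → ℝ => y j)
        (ContinuousLinearMap.proj (R := ℝ) (φ := fun _ : Fin d => ℝ) j) x :=
      fun j => hasFDerivAt_apply j x
    have h := layer_aux (A1 i) (b1 i) (fun j y => y j) x (fun j => (hd j).differentiableAt)
    rw [e]
    refine ⟨h.1, fun k => (h.2 _).trans ?_⟩
    simp only [(hd _).fderiv]
    simpa [Pi.single_apply] using hA1 i k
  | succ n ih =>
    intro i x
    have e : (fun y => v (n + 1 + 1) y i) =
        fun y => Real.tanh (∑ j, A (n + 1 + 1) i j * v (n + 1) y j + b (n + 1 + 1) i) := by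
      funext y
      exact hv (n + 1 + 1) (by omega) i y
    have h := layer_aux (A (n + 1 + 1) i) (b (n + 1 + 1) i) (fun j y => v (n + 1) y j) x
      (fun j => (ih j x).1)
    rw [e]
    refine ⟨h.1, fun k => (h.2 _).trans ?_⟩
    refine (Finset.abs_sum_le_sum_abs _ _).trans ?_
    calc _ ≤ ∑ _j : Fin W, R * (R ^ (n + 1) * (W : ℝ) ^ n) := by
          refine Finset.sum_le_sum fun j _ => ?_
          rw [abs_mul]
          exact mul_le_mul (hA _ i j) ((ih j x).2 k) (abs_nonneg _) hR
      _ = _ := by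
          simp only [Finset.sum_const, Finset.card_univ, Fintype.card_fin, nsmul_eq_mul]
          ring
end
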